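/- arXiv:1705.03990 — 2 statements merged into one kernel-verified Lean document; each statement's English description precedes it below -/
import Mathlib

section
/- Define ψ : (0,∞) → ℝ by ψ(θ) := G(1/θ) − θ, where G(ζ) := K₃(ζ)/K₂(ζ) and K_ν(ζ) := ∫₀^∞ cosh(νt)·exp(−ζ·cosh t) dt. Then ψ is strictly increasing on (0,∞), ψ(θ) → 1 as θ → 0⁺, and ψ(θ) → +∞ as θ → +∞. Consequently, for every real e > 1 the equation G(1/θ) − θ = e has exactly one solution θ ∈ (0,∞). -/
/-- Modified Bessel function of the second kind,
`K_ν(ζ) = ∫₀^∞ cosh(νt)·exp(−ζ·cosh t) dt`. -/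
noncomputable def besselK (ν ζ : ℝ) : ℝ :=
  ∫ t in Set.Ioi (0 : ℝ), Real.cosh (ν * t) * Real.exp (-ζ * Real.cosh t)

/-- `ψ(θ) = G(1/θ) − θ` where `G(ζ) = K₃(ζ)/K₂(ζ)`. -/
noncomputable def psiFn (θ : ℝ) : ℝ := besselK 3 (1 / θ) / besselK 2 (1 / θ) - θ

noncomputable def bJ (n : ℕ) (z : ℝ) : ℝ :=
  ∫ t in Set.Ioi (0 : ℝ), Real.cosh t ^ n * Real.exp (-z * Real.cosh t)

lemma cosh_lb (t : ℝ) : 1 + t ^ 2 / 2 ≤ Real.cosh t := by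
  have h1 : Real.cosh t = 1 + 2 * Real.sinh (t / 2) ^ 2 := by
    have h := Real.cosh_two_mul (t / 2)
    rw [Real.cosh_sq, show 2 * (t / 2) = t by ring] at h
    linarith
  have h2 : (t / 2) ^ 2 ≤ Real.sinh (t / 2) ^ 2 := by
    rw [sq_le_sq, Real.abs_sinh]
    exact Real.self_le_sinh_iff.2 (abs_nonneg _)
  nlinarith

lemma bJ_integrable (n : ℕ) {z : ℝ} (hz : 0 < z) :
    MeasureTheory.IntegrableOn (fun t => Real.cosh t ^ n * Real.exp (-z * Real.cosh t))
      (Set.Ioi (0 : ℝ)) := by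
  have h1 : MeasureTheory.IntegrableOn
      (fun t : ℝ => Real.exp (((n : ℝ) + 1) ^ 2 / (2 * z)) * Real.exp (-1 * t)) (Set.Ioi 0) :=
    (exp_neg_integrableOn_Ioi 0 one_pos).const_mul _
  refine h1.mono' ?_ ?_
  · exact Continuous.aestronglyMeasurable (by fun_prop)
  · refine (MeasureTheory.ae_restrict_iff' measurableSet_Ioi).2 (Filter.Eventually.of_forall ?_)
    intro t ht
    have ht : 0 < t := ht
    rw [Real.norm_of_nonneg (by positivity), ← Real.exp_add]
    have hc : Real.cosh t ^ n ≤ Real.exp (n * t) := by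
      rw [Real.exp_nat_mul]
      gcongr
      rw [Real.cosh_eq]
      have : Real.exp (-t) ≤ Real.exp t := Real.exp_le_exp.2 (by linarith)
      linarith
    calc _ ≤ Real.exp (n * t) * Real.exp (-z * Real.cosh t) := by gcongr
      _ = Real.exp (n * t + -z * Real.cosh t) := by rw [Real.exp_add]
      _ ≤ _ := by
        apply Real.exp_le_exp.2
        have h2 : z * (1 + t ^ 2 / 2) ≤ z * Real.cosh t :=
          mul_le_mul_of_nonneg_left (cosh_lb t) hz.le
        have h3 : 0 ≤ ((n : ℝ) + 1 - z * t) ^ 2 / (2 * z) := by positivity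
        have h4 : ((n : ℝ) + 1 - z * t) ^ 2 / (2 * z)
            = ((n : ℝ) + 1) ^ 2 / (2 * z) - ((n : ℝ) + 1) * t + z * t ^ 2 / 2 := by
          field_simp
          ring
        nlinarith

lemma pos_integral {f : ℝ → ℝ} (hf : MeasureTheory.IntegrableOn f (Set.Ioi (0 : ℝ))) (a : ℝ)
    (h0 : ∀ t, 0 < t → 0 ≤ f t) (h1 : ∀ t, 0 < t → a < t → 0 < f t) :
    0 < ∫ t in Set.Ioi (0 : ℝ), f t := by
  rw [MeasureTheory.setIntegral_pos_iff_support_of_nonneg_ae _ hf]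
  · have : Set.Ioi (max 0 a) ⊆ Function.support f ∩ Set.Ioi 0 := by
      intro t ht
      have ht : max 0 a < t := ht
      exact ⟨(h1 t (lt_of_le_of_lt (le_max_left _ _) ht)
        (lt_of_le_of_lt (le_max_right _ _) ht)).ne', lt_of_le_of_lt (le_max_left _ _) ht⟩
    refine lt_of_lt_of_le ?_ (MeasureTheory.measure_mono this)
    simp
  · exact (MeasureTheory.ae_restrict_iff' measurableSet_Ioi).2 (Filter.Eventually.of_forall h0)

/-- Integrals of polynomials in `cosh`, degree at most four. -/
lemma comb (a0 a1 a2 a3 a4 : ℝ) {z : ℝ} (hz : 0 < z) :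
    MeasureTheory.IntegrableOn (fun t => (a0 + a1 * Real.cosh t + a2 * Real.cosh t ^ 2
      + a3 * Real.cosh t ^ 3 + a4 * Real.cosh t ^ 4) * Real.exp (-z * Real.cosh t))
      (Set.Ioi (0 : ℝ)) ∧
    ∫ t in Set.Ioi (0 : ℝ), (a0 + a1 * Real.cosh t + a2 * Real.cosh t ^ 2
      + a3 * Real.cosh t ^ 3 + a4 * Real.cosh t ^ 4) * Real.exp (-z * Real.cosh t)
      = a0 * bJ 0 z + a1 * bJ 1 z + a2 * bJ 2 z + a3 * bJ 3 z + a4 * bJ 4 z := by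
  have i0 := (bJ_integrable 0 hz).const_mul a0
  have i1 := (bJ_integrable 1 hz).const_mul a1
  have i2 := (bJ_integrable 2 hz).const_mul a2
  have i3 := (bJ_integrable 3 hz).const_mul a3
  have i4 := (bJ_integrable 4 hz).const_mul a4
  have e : (fun t => (a0 + a1 * Real.cosh t + a2 * Real.cosh t ^ 2
      + a3 * Real.cosh t ^ 3 + a4 * Real.cosh t ^ 4) * Real.exp (-z * Real.cosh t))
      = fun t => a0 * (Real.cosh t ^ 0 * Real.exp (-z * Real.cosh t))
        + a1 * (Real.cosh t ^ 1 * Real.exp (-z * Real.cosh t))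
        + a2 * (Real.cosh t ^ 2 * Real.exp (-z * Real.cosh t))
        + a3 * (Real.cosh t ^ 3 * Real.exp (-z * Real.cosh t))
        + a4 * (Real.cosh t ^ 4 * Real.exp (-z * Real.cosh t)) := by
    funext t; ring
  rw [e]
  refine ⟨(((i0.add i1).add i2).add i3).add i4, ?_⟩
  have j1 := i0.add i1
  have j2 := j1.add i2
  have j3 := j2.add i3
  simp only [Pi.add_def] at j1 j2 j3
  rw [MeasureTheory.integral_add j3 i4,
    MeasureTheory.integral_add j2 i3,
    MeasureTheory.integral_add j1 i2,
    MeasureTheory.integral_add i0 i1]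
  simp only [MeasureTheory.integral_const_mul, bJ]

lemma cosh_atTop : Filter.Tendsto Real.cosh Filter.atTop Filter.atTop := by
  refine Filter.tendsto_atTop_mono' _ ?_ Filter.tendsto_id
  filter_upwards with t
  have := cosh_lb t
  simp only [id]
  nlinarith [sq_nonneg (t - 1)]

lemma bdry (n : ℕ) {z : ℝ} (hz : 0 < z) : Filter.Tendsto
    (fun t => Real.sinh t * Real.cosh t ^ n * Real.exp (-z * Real.cosh t))
    Filter.atTop (nhds 0) := by
  have h1 := (Real.tendsto_pow_mul_exp_neg_atTop_nhds_zero (n + 1)).comp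
    (cosh_atTop.const_mul_atTop hz)
  have h2 := h1.const_mul ((z ^ (n + 1))⁻¹)
  rw [mul_zero] at h2
  refine squeeze_zero_norm (fun t => ?_) h2
  have hz' : z ^ (n + 1) ≠ 0 := by positivity
  have hs : |Real.sinh t| ≤ Real.cosh t := by
    rw [Real.abs_sinh, ← Real.cosh_abs t]; exact (Real.sinh_lt_cosh _).le
  have hc := Real.cosh_pos t
  rw [norm_mul, norm_mul, Real.norm_eq_abs, Real.norm_of_nonneg (Real.exp_pos _).le,
    Real.norm_of_nonneg (by positivity)]
  simp only [Function.comp]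
  have e : (z ^ (n + 1))⁻¹ * ((z * Real.cosh t) ^ (n + 1) * Real.exp (-(z * Real.cosh t)))
      = Real.cosh t * Real.cosh t ^ n * Real.exp (-z * Real.cosh t) := by
    rw [mul_pow, mul_assoc, inv_mul_cancel_left₀ hz', pow_succ', neg_mul]
  rw [e]
  gcongr

lemma rec1 {z : ℝ} (hz : 0 < z) : 2 * bJ 2 z - bJ 0 z = z * (bJ 3 z - bJ 1 z) := by
  have hc := comb (-1) z 2 (-z) 0 hz
  have := MeasureTheory.integral_Ioi_of_hasDerivAt_of_tendsto (a := (0 : ℝ))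
    (f := fun t => Real.sinh t * Real.cosh t ^ 1 * Real.exp (-z * Real.cosh t))
    (by fun_prop : Continuous _).continuousWithinAt (fun t _ => ?_) hc.1 (bdry 1 hz)
  · rw [hc.2] at this
    simp at this
    linarith
  · have h := ((Real.hasDerivAt_sinh t).mul ((Real.hasDerivAt_cosh t).pow 1)).mul
      ((Real.hasDerivAt_cosh t).const_mul (-z)).exp
    refine h.congr_deriv ?_
    have := Real.sinh_sq t
    simp
    linear_combination (Real.exp (-(z * Real.cosh t)) * (1 - z * Real.cosh t)) * this

lemma rec2 {z : ℝ} (hz : 0 < z) : 3 * bJ 3 z - 2 * bJ 1 z = z * (bJ 4 z - bJ 2 z) := by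
  have hc := comb 0 (-2) z 3 (-z) hz
  have := MeasureTheory.integral_Ioi_of_hasDerivAt_of_tendsto (a := (0 : ℝ))
    (f := fun t => Real.sinh t * Real.cosh t ^ 2 * Real.exp (-z * Real.cosh t))
    (by fun_prop : Continuous _).continuousWithinAt (fun t _ => ?_) hc.1 (bdry 2 hz)
  · rw [hc.2] at this
    simp at this
    linarith
  · have h := ((Real.hasDerivAt_sinh t).mul ((Real.hasDerivAt_cosh t).pow 2)).mul
      ((Real.hasDerivAt_cosh t).const_mul (-z)).exp
    refine h.congr_deriv ?_
    have := Real.sinh_sq t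
    simp
    linear_combination (Real.exp (-(z * Real.cosh t)) *
      (2 * Real.cosh t - z * Real.cosh t ^ 2)) * this

lemma K2_eq {z : ℝ} (hz : 0 < z) : besselK 2 z = 2 * bJ 2 z - bJ 0 z := by
  have hc := comb (-1) 0 2 0 0 hz
  have : besselK 2 z =
      -1 * bJ 0 z + 0 * bJ 1 z + 2 * bJ 2 z + 0 * bJ 3 z + 0 * bJ 4 z := by
    rw [besselK]
    refine Eq.trans (MeasureTheory.integral_congr_ae (Filter.Eventually.of_forall ?_)) hc.2
    intro t
    simp only [Real.cosh_two_mul, Real.sinh_sq]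
    ring
  rw [this]; ring

lemma K3_eq {z : ℝ} (hz : 0 < z) : besselK 3 z = 4 * bJ 3 z - 3 * bJ 1 z := by
  have hc := comb 0 (-3) 0 4 0 hz
  have : besselK 3 z =
      0 * bJ 0 z + -3 * bJ 1 z + 0 * bJ 2 z + 4 * bJ 3 z + 0 * bJ 4 z := by
    rw [besselK]
    refine Eq.trans (MeasureTheory.integral_congr_ae (Filter.Eventually.of_forall ?_)) hc.2
    intro t
    simp only [Real.cosh_three_mul]
    ring
  rw [this]; ring

lemma A_pos {z : ℝ} (hz : 0 < z) : 0 < bJ 3 z - bJ 1 z := by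
  have hc := comb 0 (-1) 0 1 0 hz
  have := pos_integral hc.1 0 ?_ ?_
  · rw [hc.2] at this; linarith
  all_goals
    intro t ht
    intros
    have h1 : 1 < Real.cosh t := Real.one_lt_cosh.2 ht.ne'
    have : 0 < Real.cosh t * (Real.cosh t ^ 2 - 1) := by
      apply mul_pos <;> nlinarith
    have h2 : 0 < Real.cosh t * (Real.cosh t ^ 2 - 1) * Real.exp (-z * Real.cosh t) := by positivity
    ring_nf at h2 ⊢
    linarith

lemma psi_eq {θ : ℝ} (h : 0 < θ) :
    psiFn θ = (bJ 4 (1 / θ) - bJ 2 (1 / θ)) / (bJ 3 (1 / θ) - bJ 1 (1 / θ)) := by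
  have hz : 0 < 1 / θ := by positivity
  have hA := A_pos hz
  have r1 := rec1 hz
  have r2 := rec2 hz
  rw [psiFn, K2_eq hz, K3_eq hz, r1]
  generalize bJ 4 (1 / θ) = j4 at *
  generalize bJ 3 (1 / θ) = j3 at *
  generalize bJ 2 (1 / θ) = j2 at *
  generalize bJ 1 (1 / θ) = j1 at *
  have : j4 - j2 = θ * (3 * j3 - 2 * j1) := by rw [r2]; field_simp
  rw [this]
  field_simp
  ring

lemma psi_lower {θ : ℝ} (h : 0 < θ) : 3 * θ ≤ psiFn θ := by
  have hz : 0 < 1 / θ := by positivity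
  have hA := A_pos hz
  have r2 := rec2 hz
  have h1 : 0 ≤ bJ 1 (1 / θ) := MeasureTheory.integral_nonneg fun t => by
    have := Real.cosh_pos t
    positivity
  rw [psi_eq h, le_div_iff₀ hA]
  have : bJ 4 (1 / θ) - bJ 2 (1 / θ) = θ * (3 * bJ 3 (1 / θ) - 2 * bJ 1 (1 / θ)) := by
    rw [r2]; field_simp
  rw [this]
  nlinarith

lemma psi_one {θ : ℝ} (h : 0 < θ) : 1 ≤ psiFn θ := by
  have hz : 0 < 1 / θ := by positivity
  have hA := A_pos hz
  rw [psi_eq h, le_div_iff₀ hA]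
  have hc := comb 0 1 (-1) (-1) 1 hz
  have : 0 ≤ ∫ t in Set.Ioi (0 : ℝ), (0 + 1 * Real.cosh t + (-1) * Real.cosh t ^ 2
      + (-1) * Real.cosh t ^ 3 + 1 * Real.cosh t ^ 4) * Real.exp (-(1 / θ) * Real.cosh t) := by
    apply MeasureTheory.integral_nonneg
    intro t
    apply mul_nonneg _ (Real.exp_pos _).le
    have h1 := Real.one_le_cosh t
    have : 0 ≤ Real.cosh t * (Real.cosh t + 1) * (Real.cosh t - 1) ^ 2 := by positivity
    nlinarith
  rw [hc.2] at this
  linarith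

lemma psi_upper {θ : ℝ} (h : 0 < θ) : psiFn θ ≤ 1 + 3 * θ := by
  have hz : 0 < 1 / θ := by positivity
  have hA := A_pos hz
  have r1 := rec1 hz
  have r2 := rec2 hz
  rw [psi_eq h, div_le_iff₀ hA]
  have hc := comb (-1) (-1) 2 0 0 hz
  have : 0 ≤ ∫ t in Set.Ioi (0 : ℝ), (-1 + (-1) * Real.cosh t + 2 * Real.cosh t ^ 2
      + 0 * Real.cosh t ^ 3 + 0 * Real.cosh t ^ 4) * Real.exp (-(1 / θ) * Real.cosh t) := by
    apply MeasureTheory.integral_nonneg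
    intro t
    apply mul_nonneg _ (Real.exp_pos _).le
    have h1 := Real.one_le_cosh t
    nlinarith
  rw [hc.2] at this
  generalize bJ 4 (1 / θ) = j4 at *
  generalize bJ 3 (1 / θ) = j3 at *
  generalize bJ 2 (1 / θ) = j2 at *
  generalize bJ 1 (1 / θ) = j1 at *
  generalize bJ 0 (1 / θ) = j0 at *
  have e1 : j4 - j2 = θ * (3 * j3 - 2 * j1) := by rw [r2]; field_simp
  have e2 : j3 - j1 = θ * (2 * j2 - j0) := by rw [r1]; field_simp
  have e3 : 0 ≤ θ * (2 * j2 - j1 - j0) := mul_nonneg h.le (by linarith)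
  nlinarith

lemma psi_mono : StrictMonoOn psiFn (Set.Ioi (0 : ℝ)) := by
  intro x hx y hy hxy
  have hx : 0 < x := hx
  have hy : 0 < y := hy
  have hz2 : 0 < 1 / x := by positivity
  have hz1 : 0 < 1 / y := by positivity
  have hzz : 1 / y < 1 / x := one_div_lt_one_div_of_lt hx hxy
  have hA1 := A_pos hz1
  have hA2 := A_pos hz2
  rw [psi_eq hx, div_lt_iff₀ hA2]
  have hm : psiFn y * (bJ 3 (1 / y) - bJ 1 (1 / y)) = bJ 4 (1 / y) - bJ 2 (1 / y) := by
    rw [psi_eq hy]; field_simp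
  generalize psiFn y = m at *
  generalize 1 / x = z2 at *
  generalize 1 / y = z1 at *
  have c1 := comb 0 m (-1) (-m) 1 hz1
  have c2 := comb 0 m (-1) (-m) 1 hz2
  have i1 := c1.1.const_mul (Real.exp (-(z2 - z1) * m))
  have key := pos_integral (i1.sub c2.1) m ?_ ?_
  · simp only [Pi.sub_apply] at key
    rw [MeasureTheory.integral_sub i1 c2.1, MeasureTheory.integral_const_mul, c1.2, c2.2] at key
    have : 0 * bJ 0 z1 + m * bJ 1 z1 + -1 * bJ 2 z1 + -m * bJ 3 z1 + 1 * bJ 4 z1 = 0 := by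
      linarith
    rw [this] at key
    linarith
  all_goals
    intro t ht
    have h1 : 1 < Real.cosh t := Real.one_lt_cosh.2 ht.ne'
    have hp : 0 < Real.cosh t * (Real.cosh t ^ 2 - 1) * Real.exp (-z1 * Real.cosh t) := by
      apply mul_pos _ (Real.exp_pos _)
      apply mul_pos <;> nlinarith
    have he : Real.exp (-z2 * Real.cosh t)
        = Real.exp (-z1 * Real.cosh t) * Real.exp (-(z2 - z1) * Real.cosh t) := by
      rw [← Real.exp_add]; congr 1; ring
    have hf : Real.exp (-(z2 - z1) * m) * ((0 + m * Real.cosh t + -1 * Real.cosh t ^ 2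
        + -m * Real.cosh t ^ 3 + 1 * Real.cosh t ^ 4) * Real.exp (-z1 * Real.cosh t)) -
        (0 + m * Real.cosh t + -1 * Real.cosh t ^ 2
        + -m * Real.cosh t ^ 3 + 1 * Real.cosh t ^ 4) * Real.exp (-z2 * Real.cosh t)
        = Real.cosh t * (Real.cosh t ^ 2 - 1) * Real.exp (-z1 * Real.cosh t) *
          ((Real.cosh t - m) *
            (Real.exp (-(z2 - z1) * m) - Real.exp (-(z2 - z1) * Real.cosh t))) := by
      rw [he]; ring
    simp only [Pi.sub_apply]
    rw [hf]
  · apply mul_nonneg hp.le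
    rcases le_total m (Real.cosh t) with h | h
    · apply mul_nonneg (by linarith)
      rw [sub_nonneg]
      apply Real.exp_le_exp.2
      nlinarith
    · apply mul_nonneg_of_nonpos_of_nonpos (by linarith)
      rw [sub_nonpos]
      apply Real.exp_le_exp.2
      nlinarith
  · intro hmt
    apply mul_pos hp
    have h : m < Real.cosh t := by nlinarith [cosh_lb t, sq_nonneg (t - 1)]
    apply mul_pos (by linarith)
    rw [sub_pos]
    apply Real.exp_lt_exp.2
    nlinarith

lemma bJ_cont (n : ℕ) : ContinuousOn (bJ n) (Set.Ioi (0 : ℝ)) := by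
  intro z hz
  have hz : 0 < z := hz
  apply ContinuousAt.continuousWithinAt
  refine MeasureTheory.continuousAt_of_dominated
    (bound := fun t => Real.cosh t ^ n * Real.exp (-(z / 2) * Real.cosh t)) ?_ ?_
    (bJ_integrable n (by positivity)) ?_
  · filter_upwards with w
    exact Continuous.aestronglyMeasurable (by fun_prop)
  · filter_upwards [lt_mem_nhds (show z / 2 < z by linarith)] with w hw
    filter_upwards with t
    have hc := Real.cosh_pos t
    rw [Real.norm_of_nonneg (by positivity)]
    gcongr
  · filter_upwards with t
    fun_prop

lemma psi_cont : ContinuousOn psiFn (Set.Ioi (0 : ℝ)) := by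
  have hm : ContinuousOn (fun θ : ℝ => 1 / θ) (Set.Ioi 0) :=
    continuousOn_const.div continuousOn_id (fun x hx => (ne_of_gt hx))
  have hmap : Set.MapsTo (fun θ : ℝ => 1 / θ) (Set.Ioi 0) (Set.Ioi 0) := by
    intro x hx
    have : 0 < x := hx
    show 0 < 1 / x
    positivity
  have hJ (n : ℕ) := (bJ_cont n).comp hm hmap
  refine ContinuousOn.congr (((hJ 4).sub (hJ 2)).div ((hJ 3).sub (hJ 1)) ?_) fun θ h => psi_eq h
  intro x hx
  exact (A_pos (hmap hx)).ne'

theorem stmt5 :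
    StrictMonoOn psiFn (Set.Ioi (0 : ℝ)) ∧
    Filter.Tendsto psiFn (nhdsWithin 0 (Set.Ioi (0 : ℝ))) (nhds 1) ∧
    Filter.Tendsto psiFn Filter.atTop Filter.atTop ∧
    ∀ e : ℝ, 1 < e → ∃! θ : ℝ, 0 < θ ∧ psiFn θ = e := by
  refine ⟨psi_mono, ?_, ?_, ?_⟩
  · have h1 : Filter.Tendsto (fun θ : ℝ => 1 + 3 * θ) (nhdsWithin 0 (Set.Ioi (0 : ℝ)))
        (nhds 1) := by
      have : Filter.Tendsto (fun θ : ℝ => 1 + 3 * θ) (nhds 0) (nhds (1 + 3 * 0)) :=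
        (by fun_prop : Continuous fun θ : ℝ => 1 + 3 * θ).tendsto 0
      simp only [mul_zero, add_zero] at this
      exact this.mono_left nhdsWithin_le_nhds
    refine tendsto_of_tendsto_of_tendsto_of_le_of_le' tendsto_const_nhds h1 ?_ ?_
    · filter_upwards [self_mem_nhdsWithin] with θ h using psi_one h
    · filter_upwards [self_mem_nhdsWithin] with θ h using psi_upper h
  · refine Filter.tendsto_atTop_mono' _ ?_ Filter.tendsto_id
    filter_upwards [Filter.eventually_gt_atTop 0] with θ h
    have := psi_lower h
    simp only [id]
    linarith
  · intro e he
    have hlo : 0 < (e - 1) / 3 := by linarith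
    have hle : (e - 1) / 3 ≤ e := by linarith
    have hsub : Set.Icc ((e - 1) / 3) e ⊆ Set.Ioi 0 := fun x hx => lt_of_lt_of_le hlo hx.1
    have hu := psi_upper hlo
    have hl := psi_lower (show 0 < e by linarith)
    obtain ⟨θ, hθ, hθe⟩ := intermediate_value_Icc hle (psi_cont.mono hsub)
      (show e ∈ Set.Icc _ _ from ⟨by linarith, by linarith⟩)
    refine ⟨θ, ⟨hsub hθ, hθe⟩, ?_⟩
    rintro y ⟨hy, hye⟩
    exact psi_mono.injOn hy (hsub hθ) (hye.trans hθe.symm)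
end

section
/- Fix ℓ ∈ ℕ and an open interval I ⊆ (0,∞). Suppose that for each ζ ∈ I, (P_k(·;ζ))_{k∈ℕ} is an orthonormal family for the weight ω^{(ℓ)}(·;ζ), and that each coefficient of the polynomial P_k(·;ζ) is a differentiable function of ζ on I. Then for every k ≥ 0, every ζ ∈ I and every x ∈ ℝ: ∂P_{k+1}/∂ζ (x;ζ) = a_k(ζ)·P_k(x;ζ) − (1/2)·(G(ζ) − 1/ζ − b_{k+1}(ζ))·P_{k+1}(x;ζ), where a_k(ζ) := ∫₁^∞ x·P_k(x;ζ)·P_{k+1}(x;ζ)·ω^{(ℓ)}(x;ζ) dx, b_{k+1}(ζ) := ∫₁^∞ x·P_{k+1}(x;ζ)²·ω^{(ℓ)}(x;ζ) dx, and G(ζ) := K₃(ζ)/K₂(ζ). -/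
open MeasureTheory Polynomial

/-- `K₂(ζ) = ∫₀^∞ cosh(2t)·exp(−ζ·cosh t) dt`. -/
noncomputable def K2 (ζ : ℝ) : ℝ :=
  ∫ t in Set.Ioi (0 : ℝ), Real.cosh (2 * t) * Real.exp (-ζ * Real.cosh t)

/-- The weight `ω^{(ℓ)}(x;ζ) = ζ·(x²−1)^{ℓ+1/2}·exp(−ζx)/((2ℓ+1)·K₂(ζ))` on `[1,∞)`. -/
noncomputable def wgt (l : ℕ) (ζ : ℝ) (x : ℝ) : ℝ :=
  ζ * (x ^ 2 - 1) ^ ((l : ℝ) + 1 / 2) * Real.exp (-ζ * x) / ((2 * (l : ℝ) + 1) * K2 ζ)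

/-- An orthonormal family for the weight `ω^{(ℓ)}(·;ζ)`: real polynomials `P k` of degree
exactly `k`, positive leading coefficients, orthonormal for the weighted inner product. -/
def IsOrthoFam (l : ℕ) (ζ : ℝ) (P : ℕ → Polynomial ℝ) : Prop :=
  (∀ k : ℕ, (P k).degree = k) ∧ (∀ k : ℕ, 0 < (P k).leadingCoeff) ∧
  ∀ i k : ℕ, (∫ x in Set.Ioi (1 : ℝ), (P i).eval x * (P k).eval x * wgt l ζ x)
      = if i = k then 1 else 0

/-- `G(ζ) = K₃(ζ)/K₂(ζ)`. -/
noncomputable def Gfn (ζ : ℝ) : ℝ := besselK 3 ζ / besselK 2 ζ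

/-- `a_k(ζ) = ∫ x·P_k·P_{k+1}·ω^{(ℓ)} dx`. -/
noncomputable def aCoef (l : ℕ) (ζ : ℝ) (P : ℕ → Polynomial ℝ) (k : ℕ) : ℝ :=
  ∫ x in Set.Ioi (1 : ℝ), x * (P k).eval x * (P (k + 1)).eval x * wgt l ζ x

/-- `b_k(ζ) = ∫ x·P_k²·ω^{(ℓ)} dx`. -/
noncomputable def bCoef (l : ℕ) (ζ : ℝ) (P : ℕ → Polynomial ℝ) (k : ℕ) : ℝ :=
  ∫ x in Set.Ioi (1 : ℝ), x * (P k).eval x ^ 2 * wgt l ζ x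


lemma lap_bound (n : ℕ) {b u : ℝ} (hb : 0 < b) (hu : 0 ≤ u) :
    u ^ n * Real.exp (-b * u) ≤ (n.factorial / (b / 2) ^ n) * Real.exp (-(b / 2) * u) := by
  have h := Real.pow_div_factorial_le_exp (b / 2 * u) (by positivity) n
  have h2 : u ^ n ≤ (n.factorial / (b / 2) ^ n) * Real.exp (b / 2 * u) := by
    rw [div_le_iff₀ (by positivity), mul_pow] at h
    rw [div_mul_eq_mul_div, le_div_iff₀ (by positivity)]
    linarith
  calc u ^ n * Real.exp (-b * u)
      ≤ ((n.factorial / (b / 2) ^ n) * Real.exp (b / 2 * u)) * Real.exp (-b * u) := by gcongr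
    _ = _ := by rw [mul_assoc, ← Real.exp_add]; ring_nf

lemma lap_int (a : ℝ) (ha : 0 ≤ a) (u g : ℝ → ℝ) (hu : Measurable u) (hg : Measurable g)
    (n : ℕ) (B : ℝ) (hux : ∀ x, a < x → x ≤ u x) (hgx : ∀ x, a < x → |g x| ≤ B * u x ^ n)
    {b : ℝ} (hb : 0 < b) :
    IntegrableOn (fun x => g x * Real.exp (-b * u x)) (Set.Ioi a) := by
  have h1 : IntegrableOn (fun x => |B| * (n.factorial / (b / 2) ^ n) *
      Real.exp (-(b / 2) * x)) (Set.Ioi a) :=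
    (integrableOn_exp_mul_Ioi (a := -(b/2)) (by linarith) a).const_mul _
  refine Integrable.mono' h1 ?_ ?_
  · exact (hg.mul (Real.measurable_exp.comp (hu.const_mul _))).aestronglyMeasurable
  · refine (ae_restrict_iff' measurableSet_Ioi).2 (Filter.Eventually.of_forall ?_)
    intro x hx
    have hx' : a < x := hx
    have hxu := hux x hx'
    have hu0 : 0 ≤ u x := by linarith
    rw [Real.norm_eq_abs, abs_mul, abs_of_pos (Real.exp_pos _)]
    calc |g x| * Real.exp (-b * u x) ≤ (|B| * u x ^ n) * Real.exp (-b * u x) := by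
          gcongr
          exact (hgx x hx').trans (by gcongr; exact le_abs_self _)
      _ = |B| * (u x ^ n * Real.exp (-b * u x)) := by ring
      _ ≤ |B| * ((n.factorial / (b / 2) ^ n) * Real.exp (-(b / 2) * u x)) := by
          gcongr |B| * ?_
          exact lap_bound n hb hu0
      _ ≤ |B| * ((n.factorial / (b / 2) ^ n) * Real.exp (-(b / 2) * x)) := by
          gcongr |B| * (_ * Real.exp ?_)
          nlinarith
      _ = _ := by ring

lemma lap_deriv (a : ℝ) (ha : 0 ≤ a) (u g : ℝ → ℝ) (hu : Measurable u) (hg : Measurable g)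
    (n : ℕ) (B : ℝ) (hux : ∀ x, a < x → x ≤ u x) (hgx : ∀ x, a < x → |g x| ≤ B * u x ^ n)
    {b : ℝ} (hb : 0 < b) :
    HasDerivAt (fun z => ∫ x in Set.Ioi a, g x * Real.exp (-z * u x))
      (-∫ x in Set.Ioi a, u x * g x * Real.exp (-b * u x)) b := by
  have hgu : ∀ x, a < x → |u x * g x| ≤ B * u x ^ (n + 1) := by
    intro x hx
    have hu0 : 0 ≤ u x := by linarith [hux x hx]
    rw [abs_mul, abs_of_nonneg hu0, pow_succ]
    nlinarith [mul_le_mul_of_nonneg_left (hgx x hx) hu0]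
  have hb2 : 0 < b / 2 := by linarith
  have h1 := lap_int a ha u (fun x => u x * g x) hu (hu.mul hg) (n + 1) B hux hgu hb2
  have key := hasDerivAt_integral_of_dominated_loc_of_deriv_le
    (μ := volume.restrict (Set.Ioi a)) (x₀ := b) (s := Set.Ioi (b / 2))
    (F := fun z x => g x * Real.exp (-z * u x))
    (F' := fun z x => -(u x * g x * Real.exp (-z * u x)))
    (bound := fun x => ‖u x * g x * Real.exp (-(b / 2) * u x)‖)
    (Ioi_mem_nhds (by linarith)) ?_ (lap_int a ha u g hu hg n B hux hgx hb) ?_ ?_ h1.norm ?_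
  · have := key.2
    rwa [integral_neg] at this
  · refine Filter.Eventually.of_forall fun z => ?_
    exact (hg.mul (Real.measurable_exp.comp (hu.const_mul _))).aestronglyMeasurable
  · exact ((hu.mul hg).mul
      (Real.measurable_exp.comp (hu.const_mul _))).neg.aestronglyMeasurable
  · refine (ae_restrict_iff' measurableSet_Ioi).2 (Filter.Eventually.of_forall ?_)
    intro x hx z hz
    have hz' : b / 2 < z := hz
    have hu0 : 0 ≤ u x := by linarith [hux x hx, Set.mem_Ioi.1 hx]
    rw [norm_neg, norm_mul, norm_mul _ (Real.exp _), Real.norm_eq_abs (Real.exp _),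
      Real.norm_eq_abs (Real.exp _), abs_of_pos (Real.exp_pos _), abs_of_pos (Real.exp_pos _)]
    gcongr ‖u x * g x‖ * Real.exp ?_
    nlinarith
  · refine Filter.Eventually.of_forall ?_
    intro x z hz
    have h : HasDerivAt (fun z : ℝ => -z * u x) (-1 * u x) z :=
      ((hasDerivAt_id z).neg).mul_const _
    have := (h.exp).const_mul (g x)
    refine this.congr_deriv ?_
    ring

lemma cosh_ge (t : ℝ) (ht : 0 < t) : t ≤ Real.cosh t :=
  (Real.self_le_sinh_iff.2 ht.le).trans (Real.sinh_lt_cosh t).le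

lemma abs_sinh_le (t : ℝ) : |Real.sinh t| ≤ Real.cosh t := by
  exact abs_le_of_sq_le_sq (by nlinarith [Real.cosh_sq t]) (Real.cosh_pos t).le

lemma bnd_c2 (t : ℝ) : |Real.cosh (2 * t)| ≤ 2 * Real.cosh t ^ 2 := by
  rw [abs_of_pos (Real.cosh_pos _), Real.cosh_two_mul]
  nlinarith [Real.cosh_sq t]

lemma bnd_s2 (t : ℝ) : |Real.sinh (2 * t)| ≤ 2 * Real.cosh t ^ 2 :=
  (abs_sinh_le _).trans ((le_abs_self _).trans (bnd_c2 t))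

lemma besselK_two_eq (z : ℝ) : besselK 2 z = K2 z := rfl

lemma K2_hasDerivAt {b : ℝ} (hb : 0 < b) :
    HasDerivAt K2 (-(besselK 3 b) + 2 / b * K2 b) b := by
  have hc : Measurable Real.cosh := Real.continuous_cosh.measurable
  have hc2 : Measurable (fun t : ℝ => Real.cosh (2 * t)) := by fun_prop
  have hs2 : Measurable (fun t : ℝ => Real.sinh (2 * t)) := by fun_prop
  have hs1 : Measurable (fun t : ℝ => Real.sinh t) := by fun_prop
  have h := lap_deriv 0 le_rfl Real.cosh (fun t => Real.cosh (2 * t)) hc hc2 2 2 cosh_ge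
    (fun t _ => bnd_c2 t) hb
  have i1 := lap_int 0 le_rfl Real.cosh (fun t => Real.cosh (2 * t)) hc hc2 2 2 cosh_ge
    (fun t _ => bnd_c2 t) hb
  have i2 := lap_int 0 le_rfl Real.cosh (fun t => Real.sinh (2 * t)) hc hs2 2 2 cosh_ge
    (fun t _ => bnd_s2 t) hb
  have i3 := lap_int 0 le_rfl Real.cosh (fun t => Real.sinh t * Real.sinh (2 * t)) hc
    (hs1.mul hs2) 3 2 cosh_ge (fun t _ => by
      rw [abs_mul]
      calc _ ≤ Real.cosh t * (2 * Real.cosh t ^ 2) :=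
            mul_le_mul (abs_sinh_le t) (bnd_s2 t) (abs_nonneg _) (Real.cosh_pos t).le
        _ = _ := by ring) hb
  have i4 := lap_int 0 le_rfl Real.cosh (fun t => Real.cosh t * Real.cosh (2 * t)) hc
    (hc.mul hc2) 3 2 cosh_ge (fun t _ => by
      rw [abs_mul, abs_of_pos (Real.cosh_pos t)]
      calc _ ≤ Real.cosh t * (2 * Real.cosh t ^ 2) :=
            mul_le_mul le_rfl (bnd_c2 t) (abs_nonneg _) (Real.cosh_pos t).le
        _ = _ := by ring) hb
  have hd : ∀ t : ℝ, HasDerivAt (fun t => Real.sinh (2 * t) * Real.exp (-b * Real.cosh t))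
      (2 * (Real.cosh (2 * t) * Real.exp (-b * Real.cosh t))
        - b * (Real.sinh t * Real.sinh (2 * t) * Real.exp (-b * Real.cosh t))) t := by
    intro t
    have h1 : HasDerivAt (fun t : ℝ => Real.sinh (2 * t)) (Real.cosh (2 * t) * (2 * 1)) t :=
      ((hasDerivAt_id t).const_mul 2).sinh
    have h2 : HasDerivAt (fun t : ℝ => Real.exp (-b * Real.cosh t))
      (Real.exp (-b * Real.cosh t) * (-b * Real.sinh t)) t :=
      ((Real.hasDerivAt_cosh t).const_mul (-b)).exp
    refine (h1.mul h2).congr_deriv ?_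
    ring
  have i5 := (i1.const_mul 2).sub (i3.const_mul b)
  have ht := tendsto_zero_of_hasDerivAt_of_integrableOn_Ioi (a := 0) (fun t _ => hd t) i5 i2
  have hz := integral_Ioi_of_hasDerivAt_of_tendsto' (a := 0) (fun t _ => hd t) i5 ht
  rw [integral_sub (i1.const_mul 2) (i3.const_mul b), integral_const_mul,
    integral_const_mul] at hz
  have h3 : besselK 3 b = (∫ t in Set.Ioi (0:ℝ), Real.cosh t * Real.cosh (2 * t) *
      Real.exp (-b * Real.cosh t)) + ∫ t in Set.Ioi (0:ℝ), Real.sinh t * Real.sinh (2 * t) *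
      Real.exp (-b * Real.cosh t) := by
    rw [← integral_add i4 i3]
    unfold besselK
    congr 1
    ext t
    rw [show (3:ℝ) * t = t + 2 * t by ring, Real.cosh_add]
    ring
  have hK : K2 b = ∫ t in Set.Ioi (0 : ℝ), Real.cosh (2 * t) * Real.exp (-b * Real.cosh t) := rfl
  rw [← hK] at hz
  simp only [mul_zero, Real.sinh_zero, zero_mul, sub_zero] at hz
  refine HasDerivAt.congr_deriv (f := K2) h ?_
  rw [h3]
  have : 2 / b * K2 b = ∫ t in Set.Ioi (0:ℝ), Real.sinh t * Real.sinh (2 * t) *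
      Real.exp (-b * Real.cosh t) := by
    rw [div_mul_eq_mul_div, div_eq_iff hb.ne']
    linarith
  rw [this]
  ring

/-- unnormalised part of the weight times a monomial -/
lemma mom_bnd (l n : ℕ) (x : ℝ) (hx : 1 < x) :
    |x ^ n * (x ^ 2 - 1) ^ ((l : ℝ) + 1 / 2)| ≤ 1 * x ^ (n + (2 * l + 1)) := by
  have hx0 : 0 ≤ x := by linarith
  have h0 : 0 ≤ x ^ 2 - 1 := by nlinarith
  have h1 : (x ^ 2 - 1) ^ ((l : ℝ) + 1 / 2) ≤ (x ^ 2) ^ ((l : ℝ) + 1 / 2) :=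
    Real.rpow_le_rpow h0 (by linarith) (by positivity)
  have h2 : (x ^ 2) ^ ((l : ℝ) + 1 / 2) = x ^ (2 * l + 1) := by
    rw [← Real.rpow_natCast, ← Real.rpow_natCast, ← Real.rpow_mul hx0]
    congr 1
    push_cast
    ring
  have h3 : 0 ≤ (x ^ 2 - 1) ^ ((l : ℝ) + 1 / 2) := Real.rpow_nonneg h0 _
  rw [abs_of_nonneg (by positivity), one_mul, pow_add x n, ← h2]
  gcongr

lemma mom_meas (l n : ℕ) :
    Measurable (fun x : ℝ => x ^ n * (x ^ 2 - 1) ^ ((l : ℝ) + 1 / 2)) := by fun_prop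

/-- raw moments -/
noncomputable def rawM (l n : ℕ) (z : ℝ) : ℝ :=
  ∫ x in Set.Ioi (1 : ℝ), x ^ n * (x ^ 2 - 1) ^ ((l : ℝ) + 1 / 2) * Real.exp (-z * x)

lemma rawM_deriv (l n : ℕ) {b : ℝ} (hb : 0 < b) :
    HasDerivAt (rawM l n) (-(rawM l (n + 1) b)) b := by
  have h := lap_deriv 1 zero_le_one (fun x => x) _ measurable_id (mom_meas l n)
    (n + (2 * l + 1)) 1 (fun x _ => le_rfl) (fun x hx => mom_bnd l n x hx) hb
  refine HasDerivAt.congr_deriv (f := rawM l n) h ?_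
  unfold rawM
  congr 2
  ext x
  ring

/-- The linear functional. -/
noncomputable def Lf (l : ℕ) (z : ℝ) (p : ℝ[X]) : ℝ :=
  ∫ x in Set.Ioi (1 : ℝ), p.eval x * wgt l z x

lemma wgt_int_mono (l n : ℕ) {b : ℝ} (hb : 0 < b) :
    IntegrableOn (fun x => x ^ n * wgt l b x) (Set.Ioi 1) := by
  have h := (lap_int 1 zero_le_one (fun x => x) _ measurable_id (mom_meas l n)
    (n + (2 * l + 1)) 1 (fun x _ => le_rfl) (fun x hx => mom_bnd l n x hx) hb).const_mul
      (b / ((2 * (l : ℝ) + 1) * K2 b))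
  refine h.congr (Filter.Eventually.of_forall fun x => ?_)
  simp only [wgt]
  ring

lemma wgt_int (l : ℕ) {b : ℝ} (hb : 0 < b) (p : ℝ[X]) :
    IntegrableOn (fun x => p.eval x * wgt l b x) (Set.Ioi 1) := by
  simp only [Polynomial.eval_eq_sum_range, Finset.sum_mul, mul_assoc]
  exact integrable_finsetSum _ fun i _ => (wgt_int_mono l i hb).const_mul _

lemma Lf_add (l : ℕ) {b : ℝ} (hb : 0 < b) (p q : ℝ[X]) :
    Lf l b (p + q) = Lf l b p + Lf l b q := by
  unfold Lf
  rw [← integral_add (wgt_int l hb p) (wgt_int l hb q)]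
  simp only [eval_add, add_mul]

lemma Lf_C_mul (l : ℕ) (b c : ℝ) (p : ℝ[X]) :
    Lf l b (C c * p) = c * Lf l b p := by
  unfold Lf
  rw [← integral_const_mul]
  simp only [eval_mul, eval_C, mul_assoc]

lemma Lf_zero (l : ℕ) (b : ℝ) : Lf l b 0 = 0 := by simp [Lf]

lemma Lf_sub (l : ℕ) {b : ℝ} (hb : 0 < b) (p q : ℝ[X]) :
    Lf l b (p - q) = Lf l b p - Lf l b q := by
  have := Lf_add l hb (p - q) q
  rw [sub_add_cancel] at this
  linarith

lemma Lf_sum (l : ℕ) {b : ℝ} (hb : 0 < b) (s : Finset ℕ) (f : ℕ → ℝ[X]) :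
    Lf l b (∑ i ∈ s, f i) = ∑ i ∈ s, Lf l b (f i) := by
  classical
  induction s using Finset.induction_on with
  | empty => simp [Lf_zero]
  | insert a s ha ih => rw [Finset.sum_insert ha, Finset.sum_insert ha, Lf_add l hb, ih]

lemma Lf_eq_sum (l : ℕ) {b : ℝ} (hb : 0 < b) (p : ℝ[X]) (N : ℕ) (hN : p.natDegree < N) :
    Lf l b p = ∑ i ∈ Finset.range N, p.coeff i * Lf l b (X ^ i) := by
  conv_lhs => rw [p.as_sum_range' N hN, Lf_sum l hb]
  refine Finset.sum_congr rfl fun i _ => ?_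
  rw [← Polynomial.C_mul_X_pow_eq_monomial, Lf_C_mul]

lemma Lf_X_pow (l n : ℕ) (b : ℝ) :
    Lf l b (X ^ n) = b / (2 * (l : ℝ) + 1) / K2 b * rawM l n b := by
  unfold Lf rawM
  rw [← integral_const_mul]
  congr 1
  ext x
  simp only [wgt, eval_pow, eval_X]
  rw [div_div]
  ring

lemma mom_deriv (l n : ℕ) {b : ℝ} (hb : 0 < b) (hK : K2 b ≠ 0) :
    HasDerivAt (fun z => Lf l z (X ^ n))
      ((Gfn b - 1 / b) * Lf l b (X ^ n) - Lf l b (X ^ (n + 1))) b := by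
  simp only [Lf_X_pow]
  have h := (((hasDerivAt_id b).div_const (2 * (l : ℝ) + 1)).div (K2_hasDerivAt hb) hK).mul
    (rawM_deriv l n hb)
  refine h.congr_deriv ?_
  rw [Gfn, besselK_two_eq]
  have : (2 * (l : ℝ) + 1) ≠ 0 := by positivity
  simp only [id, Pi.div_apply]
  field_simp
  ring

lemma Lf_deriv (l : ℕ) {b : ℝ} (hb : 0 < b) (hK : K2 b ≠ 0) (A : ℝ → ℝ[X]) (D : ℝ[X]) (N : ℕ)
    (hA : ∀ᶠ z in nhds b, (A z).natDegree < N) (hD : D.natDegree < N)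
    (hAD : ∀ n, HasDerivAt (fun z => (A z).coeff n) (D.coeff n) b) :
    HasDerivAt (fun z => Lf l z (A z))
      (Lf l b D + ((Gfn b - 1 / b) * Lf l b (A b) - Lf l b (X * A b))) b := by
  have h : HasDerivAt (fun z => ∑ i ∈ Finset.range N, (A z).coeff i * Lf l z (X ^ i))
      (∑ i ∈ Finset.range N, (D.coeff i * Lf l b (X ^ i) + (A b).coeff i *
        ((Gfn b - 1 / b) * Lf l b (X ^ i) - Lf l b (X ^ (i + 1))))) b :=
    HasDerivAt.fun_sum fun i _ => (hAD i).mul (mom_deriv l i hb hK)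
  have h2 := h.congr_of_eventuallyEq (f₁ := fun z => Lf l z (A z)) (by
    filter_upwards [hA, Ioi_mem_nhds hb] with z hz hz0
    exact Lf_eq_sum l hz0 _ N hz)
  refine h2.congr_deriv ?_
  symm
  have hX : Lf l b (X * A b) = ∑ i ∈ Finset.range N, (A b).coeff i * Lf l b (X ^ (i + 1)) := by
    conv_lhs => rw [(A b).as_sum_range' N hA.self_of_nhds, Finset.mul_sum, Lf_sum l hb]
    refine Finset.sum_congr rfl fun i _ => ?_
    rw [← Polynomial.C_mul_X_pow_eq_monomial, ← Lf_C_mul]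
    congr 1
    ring
  rw [hX, Lf_eq_sum l hb D N hD, Lf_eq_sum l hb (A b) N hA.self_of_nhds, Finset.mul_sum,
    ← Finset.sum_sub_distrib, ← Finset.sum_add_distrib]
  refine Finset.sum_congr rfl fun i _ => ?_
  ring

lemma coeff_mul_deriv {b : ℝ} (A B : ℝ → ℝ[X]) (D E : ℝ[X])
    (hA : ∀ n, HasDerivAt (fun z => (A z).coeff n) (D.coeff n) b)
    (hB : ∀ n, HasDerivAt (fun z => (B z).coeff n) (E.coeff n) b) (n : ℕ) :
    HasDerivAt (fun z => (A z * B z).coeff n) ((D * B b + A b * E).coeff n) b := by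
  simp only [coeff_mul, coeff_add, ← Finset.sum_add_distrib]
  exact HasDerivAt.fun_sum fun i _ => (hA _).mul (hB _)

lemma expand (P : ℕ → ℝ[X]) (hdeg : ∀ k : ℕ, (P k).degree = k) (n : ℕ) :
    ∀ p : ℝ[X], p.degree < n → ∃ c : ℕ → ℝ, p = ∑ i ∈ Finset.range n, C (c i) * P i := by
  induction n with
  | zero =>
    intro p hp
    refine ⟨fun _ => 0, ?_⟩
    rw [degree_lt_iff_coeff_zero] at hp
    ext m
    simp [hp m (Nat.zero_le _)]
  | succ n ih =>
    intro p hp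
    have hlc : (P n).coeff n ≠ 0 := coeff_ne_zero_of_eq_degree (hdeg n)
    have hpn : ∀ m, n < m → (P n).coeff m = 0 := fun m hm =>
      coeff_eq_zero_of_degree_lt (by rw [hdeg n]; exact_mod_cast hm)
    rw [degree_lt_iff_coeff_zero] at hp
    obtain ⟨c, hc⟩ := ih (p - C (p.coeff n / (P n).coeff n) * P n) (by
      rw [degree_lt_iff_coeff_zero]
      intro m hm
      rw [coeff_sub, coeff_C_mul]
      rcases hm.eq_or_lt with rfl | hm
      · field_simp; ring
      · rw [hp m hm, hpn m hm]; ring)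
    refine ⟨fun i => if i = n then p.coeff n / (P n).coeff n else c i, ?_⟩
    rw [Finset.sum_range_succ]
    simp only [if_true]
    rw [sub_eq_iff_eq_add] at hc
    rw [Finset.sum_congr rfl (g := fun i => C (c i) * P i)]
    · exact hc
    · intro i hi
      rw [if_neg (Finset.mem_range.1 hi).ne]

lemma Lf_ortho {l : ℕ} {z : ℝ} {P : ℕ → ℝ[X]} (h : IsOrthoFam l z P) (i k : ℕ) :
    Lf l z (P i * P k) = if i = k then 1 else 0 := by
  rw [← h.2.2 i k]
  simp only [Lf, eval_mul]

lemma Lf_expand {l : ℕ} {z : ℝ} (hz : 0 < z) {P : ℕ → ℝ[X]} (h : IsOrthoFam l z P) (n k : ℕ)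
    (c : ℕ → ℝ) : Lf l z ((∑ i ∈ Finset.range n, C (c i) * P i) * P k)
      = if k < n then c k else 0 := by
  rw [Finset.sum_mul, Lf_sum l hz]
  simp only [mul_assoc, Lf_C_mul, Lf_ortho h]
  simp

lemma Lf_low {l : ℕ} {z : ℝ} (hz : 0 < z) {P : ℕ → ℝ[X]} (h : IsOrthoFam l z P) (n : ℕ)
    (p : ℝ[X]) (hp : p.degree < n) : Lf l z (p * P n) = 0 := by
  obtain ⟨c, rfl⟩ := expand P h.1 n p hp
  rw [Lf_expand hz h]
  simp

lemma Lf_unique {l : ℕ} {z : ℝ} (hz : 0 < z) {P : ℕ → ℝ[X]} (h : IsOrthoFam l z P) (n : ℕ)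
    (p : ℝ[X]) (hp : p.degree < n) (h0 : ∀ i < n, Lf l z (p * P i) = 0) : p = 0 := by
  obtain ⟨c, rfl⟩ := expand P h.1 n p hp
  refine Finset.sum_eq_zero fun i hi => ?_
  have := h0 i (Finset.mem_range.1 hi)
  rw [Lf_expand hz h, if_pos (Finset.mem_range.1 hi)] at this
  rw [this]
  simp

lemma K2_ne {l : ℕ} {z : ℝ} {P : ℕ → ℝ[X]} (h : IsOrthoFam l z P) : K2 z ≠ 0 := by
  intro h0
  have := h.2.2 0 0
  simp [wgt, h0] at this

lemma exists_D (I : Set ℝ) (hIopen : IsOpen I) (P : ℝ → ℝ[X]) (k : ℕ)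
    (hP : ∀ z ∈ I, (P z).degree = k)
    (hdiff : ∀ n : ℕ, DifferentiableOn ℝ (fun z => (P z).coeff n) I) (b : ℝ) (hb : b ∈ I) :
    ∃ D : ℝ[X], D.degree < ((k + 1 : ℕ) : WithBot ℕ) ∧
      ∀ n, HasDerivAt (fun z => (P z).coeff n) (D.coeff n) b := by
  have hI := hIopen.mem_nhds hb
  refine ⟨∑ i ∈ Finset.range (k + 1), monomial i (deriv (fun z => (P z).coeff i) b), ?_, ?_⟩
  · rw [degree_lt_iff_coeff_zero]
    intro m hm
    simp only [finsetSum_coeff, coeff_monomial]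
    refine Finset.sum_eq_zero fun i hi => if_neg ?_
    have := Finset.mem_range.1 hi
    omega
  · intro n
    simp only [finsetSum_coeff, coeff_monomial, Finset.sum_ite_eq', Finset.mem_range]
    split_ifs with hn
    · exact ((hdiff n).differentiableAt hI).hasDerivAt
    · refine (hasDerivAt_const b (0 : ℝ)).congr_of_eventuallyEq ?_
      filter_upwards [hI] with z hz
      exact coeff_eq_zero_of_degree_lt (by rw [hP z hz]; exact_mod_cast (by omega : k < n))

lemma natDegree_of_lt {p : ℝ[X]} {k : ℕ} (h : p.degree < ((k + 1 : ℕ) : WithBot ℕ)) :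
    p.natDegree ≤ k := by
  rw [degree_lt_iff_coeff_zero] at h
  exact natDegree_le_iff_coeff_eq_zero.2 fun m hm => h m hm

lemma eval_deriv (I : Set ℝ) (hIopen : IsOpen I) (P : ℝ → ℝ[X]) (k : ℕ)
    (hP : ∀ z ∈ I, (P z).degree = k) (b : ℝ) (hb : b ∈ I) (D : ℝ[X])
    (hD : D.degree < ((k + 1 : ℕ) : WithBot ℕ))
    (h : ∀ n, HasDerivAt (fun z => (P z).coeff n) (D.coeff n) b) (x : ℝ) :
    deriv (fun z => (P z).eval x) b = D.eval x := by
  have hI := hIopen.mem_nhds hb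
  have h1 : HasDerivAt (fun z => ∑ i ∈ Finset.range (k + 1), (P z).coeff i * x ^ i)
      (∑ i ∈ Finset.range (k + 1), D.coeff i * x ^ i) b :=
    HasDerivAt.fun_sum fun i _ => (h i).mul_const _
  rw [eval_eq_sum_range' (n := k + 1)
    (Nat.lt_succ_of_le (natDegree_of_lt hD))]
  refine (h1.congr_of_eventuallyEq ?_).deriv
  filter_upwards [hI] with z hz
  rw [eval_eq_sum_range' (n := k + 1)]
  rw [natDegree_eq_of_degree_eq_some (hP z hz)]
  omega

theorem stmt10 (l : ℕ) (I : Set ℝ) (hIopen : IsOpen I) (hIsub : I ⊆ Set.Ioi (0 : ℝ))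
    (P : ℝ → ℕ → Polynomial ℝ)
    (hP : ∀ ζ ∈ I, IsOrthoFam l ζ (P ζ))
    (hdiff : ∀ k n : ℕ, DifferentiableOn ℝ (fun ζ => (P ζ k).coeff n) I) :
    ∀ k : ℕ, ∀ ζ ∈ I, ∀ x : ℝ,
      deriv (fun ζ' => (P ζ' (k + 1)).eval x) ζ
        = aCoef l ζ (P ζ) k * (P ζ k).eval x
          - (1 / 2) * (Gfn ζ - 1 / ζ - bCoef l ζ (P ζ) (k + 1)) * (P ζ (k + 1)).eval x := by
  intro k b hb x
  have hb0 : 0 < b := hIsub hb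
  have hI := hIopen.mem_nhds hb
  have hO := hP b hb
  have hK := K2_ne hO
  have hDex : ∀ i, ∃ D : ℝ[X], D.degree < ((i + 1 : ℕ) : WithBot ℕ) ∧
      ∀ n, HasDerivAt (fun z => (P z i).coeff n) (D.coeff n) b := fun i =>
    exists_D I hIopen (fun z => P z i) i (fun z hz => (hP z hz).1 i) (hdiff i) b hb
  choose D hD hDd using hDex
  -- differentiate orthonormality
  have key : ∀ i j, Lf l b (D i * P b j) + Lf l b (P b i * D j)
      + ((Gfn b - 1 / b) * (if i = j then 1 else 0) - Lf l b (X * (P b i * P b j))) = 0 := by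
    intro i j
    have hnd : ∀ z ∈ I, ∀ i, (P z i).natDegree ≤ i := fun z hz i =>
      (natDegree_eq_of_degree_eq_some ((hP z hz).1 i)).le
    have h := Lf_deriv l hb0 hK (fun z => P z i * P z j) (D i * P b j + P b i * D j)
      (i + j + 1) (by
        filter_upwards [hI] with z hz
        exact Nat.lt_succ_of_le (natDegree_mul_le_of_le (hnd z hz i) (hnd z hz j)))
      (Nat.lt_succ_of_le (natDegree_add_le_of_degree_le
        (natDegree_mul_le_of_le (natDegree_of_lt (hD i)) (hnd b hb j))
        (natDegree_mul_le_of_le (hnd b hb i) (natDegree_of_lt (hD j)))))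
      (coeff_mul_deriv _ _ _ _ (hDd i) (hDd j))
    have h2 : HasDerivAt (fun z => Lf l z (P z i * P z j)) 0 b := by
      refine (hasDerivAt_const b (if i = j then (1:ℝ) else 0)).congr_of_eventuallyEq ?_
      filter_upwards [hI] with z hz
      exact Lf_ortho (hP z hz) i j
    have h3 := h.unique h2
    rw [Lf_add l hb0, Lf_ortho hO] at h3
    exact h3
  have ha : aCoef l b (P b) k = Lf l b (X * (P b k * P b (k + 1))) := by
    simp only [aCoef, Lf, eval_mul, eval_X, mul_assoc]
  have hbc : bCoef l b (P b) (k + 1) = Lf l b (X * (P b (k + 1) * P b (k + 1))) := by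
    simp only [bCoef, Lf, eval_mul, eval_X, mul_assoc, pow_two]
  set a := aCoef l b (P b) k
  set β := -((1 / 2) * (Gfn b - 1 / b - bCoef l b (P b) (k + 1))) with hβ
  have hR : D (k + 1) - (C a * P b k + C β * P b (k + 1)) = 0 := by
    refine Lf_unique hb0 hO (k + 1 + 1) _ ?_ ?_
    · have h1 := hD (k + 1)
      rw [degree_lt_iff_coeff_zero] at h1 ⊢
      intro m hm
      have e1 : (P b k).coeff m = 0 := coeff_eq_zero_of_degree_lt (by
        rw [hO.1 k]; exact_mod_cast (by omega : k < m))
      have e2 : (P b (k + 1)).coeff m = 0 := coeff_eq_zero_of_degree_lt (by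
        rw [hO.1 (k + 1)]; exact_mod_cast (by omega : k + 1 < m))
      simp [h1 m hm, e1, e2]
    · intro i hi
      rw [sub_mul, add_mul, Lf_sub l hb0, Lf_add l hb0, mul_assoc, mul_assoc, Lf_C_mul, Lf_C_mul,
        Lf_ortho hO, Lf_ortho hO, mul_comm (D (k + 1))]
      have hk := key i (k + 1)
      rcases Nat.lt_succ_iff_lt_or_eq.1 hi with hlt | rfl
      · have z1 : Lf l b (D i * P b (k + 1)) = 0 := Lf_low hb0 hO (k + 1) _
          ((hD i).trans_le (by exact_mod_cast hlt))
        rw [z1, if_neg hlt.ne] at hk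
        rw [if_neg hlt.ne']
        rcases Nat.lt_succ_iff_lt_or_eq.1 hlt with hlt' | rfl
        · have z2 : Lf l b (X * (P b i * P b (k + 1))) = 0 := by
            rw [← mul_assoc]
            refine Lf_low hb0 hO (k + 1) _ ?_
            rw [degree_mul, degree_X, hO.1 i]
            exact_mod_cast (by omega : 1 + i < k + 1)
          rw [z2] at hk
          rw [if_neg hlt'.ne']
          linarith
        · rw [← ha] at hk
          rw [if_pos rfl]
          linarith
      · rw [← hbc, if_pos rfl, mul_comm (D (k + 1))] at hk
        rw [if_neg (by omega), if_pos rfl, hβ]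
        linarith
  rw [eval_deriv I hIopen (fun z => P z (k + 1)) (k + 1) (fun z hz => (hP z hz).1 (k + 1)) b hb
    (D (k + 1)) (hD _) (hDd _) x, sub_eq_zero.1 hR]
  simp only [eval_add, eval_mul, eval_C, hβ]
  ring
end
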